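/- Let q, α, β, γ ∈ ℂ with q ≠ 0, q^i ≠ 1 for all integers i ≥ 1, α ≠ 0, β ≠ 0, γ ≠ 0, αβ ≠ q^i for all integers i, and γ ≠ q^i for all integers i. Then for all nonnegative integers X, Y, Z: q^{−B(Y)−B(Z)} · α^{−Z} β^{X−Z} γ^{2Z−X−Y} · (α;q)_X (β;q)_Y (q/γ;q)_Z (γ;q)_{X+Y−Z} / ((q;q)_X (q;q)_Y (q;q)_Z (αβ;q)_{X+Y−Z}) = ∑ q^{mn−kl−jm−ln−B(j)−B(k)−B(l)−B(m)} · α^{−l} β^{i−l} γ^{−i−j+k+l} · (β;q)_n (αβ/γ;q)_n (γ/β;q)_i (βq^n;q)_j (q^{1−n}/(αβ);q)_k (αβq^n/γ;q)_l (q^{−n};q)_m / ((αβ;q)_n (q;q)_n (q;q)_i (q;q)_j (q;q)_k (q;q)_l (q;q)_m), where B(r) = r(r−1)/2 and the (finite) sum ranges over all nonnegative integers i, j, k, l, m, n satisfying i+l+n−m = X, j+m = Y and k+l = Z. (This is the equality of coefficients of x^X y^Y z^Z in a formal q-analogue of the Gelfand–Graev–Retakh identity.) -/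

import Mathlib

open Finset

/-- The `q`-shifted factorial `(a;q)_n` for an arbitrary integer `n`. -/
noncomputable def qpoch (q a : ℂ) (n : ℤ) : ℂ :=
  if 0 ≤ n then ∏ i ∈ Finset.range n.toNat, (1 - a * q ^ (i : ℤ))
  else (∏ i ∈ Finset.range (-n).toNat, (1 - a * q ^ (n + (i : ℤ))))⁻¹

/-!
Fix `X = t + i`, where `t = l + n - m`, and put `p = n - m`. Moving the factors of the summand past
each other by `(a)_r (a q^r)_s = (a)_{r'} (a q^{r'})_{s'}` for `r + s = r' + s'`, and reversing the
two factors whose base contains `q^{-n}`, splits the summand into a function of `(t, i)`, a function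
of `(p, l)` and a function of `(m, j)` depending on `t`. The sums over `p + l = t` and
`m + j = Y` are `q`-Vandermonde sums, and what remains over `t + i = X` is a `q`-Pfaff–Saalschütz
sum. The two Vandermonde sums are degenerate cases of the Saalschütz sum.
-/

section Field

variable {K : Type*} [Field K]

/-- The `q`-shifted factorial `(a;q)_n` over a field, for `n : ℕ`. -/
def qPochhammer (q a : K) (n : ℕ) : K := ∏ i ∈ range n, (1 - a * q ^ i)

lemma qPochhammer_zero_left (q : K) (n : ℕ) : qPochhammer q 0 n = 1 := by
  simp [qPochhammer]

lemma qPochhammer_succ (q a : K) (n : ℕ) :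
    qPochhammer q a (n + 1) = qPochhammer q a n * (1 - a * q ^ n) := prod_range_succ _ _

lemma qPochhammer_add (q a : K) (m n : ℕ) :
    qPochhammer q a (m + n) = qPochhammer q a m * qPochhammer q (a * q ^ m) n := by
  simp only [qPochhammer, prod_range_add, pow_add, mul_assoc]

lemma qPochhammer_succ' (q a : K) (n : ℕ) :
    qPochhammer q a (n + 1) = (1 - a) * qPochhammer q (a * q) n := by
  rw [add_comm, qPochhammer_add]
  simp [qPochhammer]

lemma qPochhammer_mul_eq_of_add_eq {m n m' n' : ℕ} (h : m + n = m' + n') (q a : K) :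
    qPochhammer q a m * qPochhammer q (a * q ^ m) n =
      qPochhammer q a m' * qPochhammer q (a * q ^ m') n' := by
  rw [← qPochhammer_add, ← qPochhammer_add, h]

lemma qPochhammer_ne_zero_of_le {q a : K} {m n : ℕ} (hmn : m ≤ n) (hn : qPochhammer q a n ≠ 0) :
    qPochhammer q a m ≠ 0 := by
  obtain ⟨d, rfl⟩ := Nat.exists_eq_add_of_le hmn
  exact left_ne_zero_of_mul (qPochhammer_add q a m d ▸ hn)

lemma one_sub_mul_pow_ne_zero {q a : K} {m n : ℕ} (hmn : m < n) (hn : qPochhammer q a n ≠ 0) :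
    1 - a * q ^ m ≠ 0 :=
  prod_ne_zero_iff.1 hn m (mem_range.2 hmn)

lemma qPochhammer_ne_zero {q a : K} (h : ∀ i : ℕ, a * q ^ i ≠ 1) (n : ℕ) :
    qPochhammer q a n ≠ 0 :=
  prod_ne_zero_iff.2 fun i _ => sub_ne_zero.2 (h i).symm

lemma qPochhammer_mul_zpow_ne_zero {q a : K} (hq : q ≠ 0) (ha : ∀ i : ℤ, a ≠ q ^ i) (k : ℤ)
    (n : ℕ) : qPochhammer q (a * q ^ k) n ≠ 0 := by
  refine qPochhammer_ne_zero (fun i h => ha (-(k + i)) ?_) n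
  rwa [mul_assoc, ← zpow_natCast, ← zpow_add₀ hq, mul_eq_one_iff_eq_inv₀ (zpow_ne_zero _ hq),
    ← zpow_neg] at h

lemma two_mul_choose_two (n : ℕ) : 2 * (n.choose 2 : ℤ) = n * n - n := by
  have cast_eq : (2 * n.choose 2 : ℚ) = n * n - n := by rw [Nat.cast_choose_two]; ring
  exact_mod_cast cast_eq

lemma qPochhammer_reverse {q x : K} (hq : q ≠ 0) (hx : x ≠ 0) (n : ℕ) :
    qPochhammer q (q ^ (1 - n : ℤ) / x) n =
      (-1) ^ n * x ^ (-n : ℤ) * q ^ (-n.choose 2 : ℤ) * qPochhammer q x n := by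
  induction n with
  | zero => simp [qPochhammer]
  | succ n ih =>
    have first : q ^ (1 - (n + 1 : ℕ) : ℤ) = (q ^ n)⁻¹ := by
      rw [← zpow_natCast, ← zpow_neg]; congr 1; push_cast; ring
    have rest : q ^ (1 - (n + 1 : ℕ) : ℤ) / x * q = q ^ (1 - n : ℤ) / x := by
      rw [div_mul_eq_mul_div, ← zpow_add_one₀ hq]; congr 2; push_cast; ring
    rw [qPochhammer_succ', rest, ih, first, qPochhammer_succ]
    simp only [Nat.choose_succ_succ' n 1,
      Nat.choose_one_right, zpow_neg, zpow_natCast, pow_add, pow_one]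
    field_simp
    ring

/-- The summand of the `q`-Pfaff–Saalschütz sum, homogenised: the parameter `b` is replaced by
`g = b * e`, and `e ^ m * (b;q)_m` becomes `∏ i < m, (e - g * q ^ i)`. The value `e = 0` is then
allowed, which is what turns Saalschütz's sum into a `q`-Vandermonde sum. -/
def saalschutzTerm (q a e g : K) (m j : ℕ) : K :=
  qPochhammer q a m * (∏ i ∈ range m, (e - g * q ^ i)) * qPochhammer q e j /
    (qPochhammer q (a * g) m * qPochhammer q q m * qPochhammer q q j)

lemma saalschutzTerm_succ_left {q : K} (a e g : K) {m : ℕ} (j : ℕ) (hq : 1 - q * q ^ m ≠ 0)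
    (hag : 1 - a * g * q ^ m ≠ 0) :
    (1 - a * g * q ^ m) * (1 - q * q ^ m) * saalschutzTerm q a e g (m + 1) j =
      (1 - a * q ^ m) * (e - g * q ^ m) * saalschutzTerm q a e g m j := by
  simp only [saalschutzTerm, qPochhammer_succ, prod_range_succ]
  generalize 1 - q * q ^ m = u at *
  generalize 1 - a * g * q ^ m = v at *
  field_simp

lemma saalschutzTerm_succ_right {q : K} (a e g : K) (m : ℕ) {j : ℕ} (hq : 1 - q * q ^ j ≠ 0) :
    (1 - q * q ^ j) * saalschutzTerm q a e g m (j + 1) =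
      (1 - e * q ^ j) * saalschutzTerm q a e g m j := by
  simp only [saalschutzTerm, qPochhammer_succ]
  generalize 1 - q * q ^ j = u at *
  field_simp

lemma sum_saalschutzTerm_succ {q : K} (a e g : K) {n : ℕ} (hq : qPochhammer q q (n + 1) ≠ 0)
    (hag : qPochhammer q (a * g) (n + 1) ≠ 0) :
    (1 - q * q ^ n) * (1 - a * g * q ^ n) *
        ∑ x ∈ antidiagonal (n + 1), saalschutzTerm q a e g x.1 x.2 =
      (1 - a * e * q ^ n) * (1 - g * q ^ n) *
        ∑ x ∈ antidiagonal n, saalschutzTerm q a e g x.1 x.2 := by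
  set S := saalschutzTerm q a e g
  have split (x : ℕ × ℕ) (hx : x ∈ antidiagonal (n + 1)) :
      (1 - q * q ^ n) * (1 - a * g * q ^ n) * S x.1 x.2 =
        (1 - q ^ x.2) * (1 - a * g * q ^ x.1 * q ^ n) * S x.1 x.2 +
        q ^ x.2 * (1 - a * g * q ^ (x.1 - 1)) * (1 - q ^ x.1) * S x.1 x.2 := by
    rcases x with ⟨_ | m, j⟩ <;> rw [HasAntidiagonal.mem_antidiagonal] at hx
    · obtain rfl : j = n + 1 := by omega
      simp only [pow_zero, pow_succ]; ring
    · obtain rfl : n = m + j := by omega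
      simp only [pow_add, pow_one, Nat.add_sub_cancel]; ring
  have merge (x : ℕ × ℕ) (hx : x ∈ antidiagonal n) :
      (1 - q ^ (x.2 + 1)) * (1 - a * g * q ^ x.1 * q ^ n) * S x.1 (x.2 + 1) +
        q ^ x.2 * (1 - a * g * q ^ x.1) * (1 - q ^ (x.1 + 1)) * S (x.1 + 1) x.2 =
      (1 - a * e * q ^ n) * (1 - g * q ^ n) * S x.1 x.2 := by
    obtain ⟨m, j⟩ := x
    rw [HasAntidiagonal.mem_antidiagonal] at hx
    dsimp only at hx ⊢
    have left := saalschutzTerm_succ_left a e g j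
      (one_sub_mul_pow_ne_zero (by omega : m < n + 1) hq) (one_sub_mul_pow_ne_zero (by omega) hag)
    have right := saalschutzTerm_succ_right a e g m
      (one_sub_mul_pow_ne_zero (by omega : j < n + 1) hq)
    simp only [← hx, pow_add, pow_one]
    linear_combination (1 - a * g * q ^ m * (q ^ m * q ^ j)) * right + q ^ j * left
  rw [mul_sum, sum_congr rfl split, sum_add_distrib, Nat.sum_antidiagonal_succ',
    Nat.sum_antidiagonal_succ (n := n)]
  simp only [pow_zero, sub_self, zero_mul, mul_zero, zero_add, Nat.add_sub_cancel]
  rw [← sum_add_distrib, sum_congr rfl merge, mul_sum]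

lemma sum_saalschutzTerm {q : K} (a e g : K) {n : ℕ} (hq : qPochhammer q q n ≠ 0)
    (hag : qPochhammer q (a * g) n ≠ 0) :
    ∑ x ∈ antidiagonal n, saalschutzTerm q a e g x.1 x.2 =
      qPochhammer q (a * e) n * qPochhammer q g n /
        (qPochhammer q q n * qPochhammer q (a * g) n) := by
  induction n with
  | zero => simp [saalschutzTerm, qPochhammer]
  | succ n ih =>
    have hq_last := one_sub_mul_pow_ne_zero n.lt_succ_self hq
    have hag_last := one_sub_mul_pow_ne_zero n.lt_succ_self hag
    apply mul_left_cancel₀ (mul_ne_zero hq_last hag_last)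
    rw [sum_saalschutzTerm_succ a e g hq hag, ih (qPochhammer_ne_zero_of_le n.le_succ hq)
      (qPochhammer_ne_zero_of_le n.le_succ hag)]
    simp only [qPochhammer_succ]
    generalize 1 - q * q ^ n = u at *
    generalize 1 - a * g * q ^ n = v at *
    field_simp

lemma qSaalschutz {q : K} (a b e : K) {n : ℕ} (hq : qPochhammer q q n ≠ 0)
    (habe : qPochhammer q (a * b * e) n ≠ 0) :
    ∑ x ∈ antidiagonal n, e ^ x.1 * qPochhammer q a x.1 * qPochhammer q b x.1 *
        qPochhammer q e x.2 /
          (qPochhammer q (a * b * e) x.1 * qPochhammer q q x.1 * qPochhammer q q x.2) =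
      qPochhammer q (a * e) n * qPochhammer q (b * e) n /
        (qPochhammer q q n * qPochhammer q (a * b * e) n) := by
  have homogenize (m : ℕ) :
      ∏ i ∈ range m, (e - b * e * q ^ i) = e ^ m * qPochhammer q b m := by
    rw [qPochhammer, ← card_range m, ← prod_const, card_range, ← prod_mul_distrib]
    exact prod_congr rfl fun i _ => by ring
  rw [mul_assoc] at habe ⊢
  rw [← sum_saalschutzTerm a e (b * e) hq habe]
  refine sum_congr rfl fun x _ => ?_
  rw [saalschutzTerm, homogenize]
  ring

lemma qVandermonde_convolution {q : K} (a e : K) {n : ℕ} (hq : qPochhammer q q n ≠ 0) :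
    ∑ x ∈ antidiagonal n, e ^ x.1 * qPochhammer q a x.1 * qPochhammer q e x.2 /
        (qPochhammer q q x.1 * qPochhammer q q x.2) =
      qPochhammer q (a * e) n / qPochhammer q q n := by
  simpa [qPochhammer_zero_left] using qSaalschutz a 0 e hq

lemma qVandermonde {q : K} (a g : K) {n : ℕ} (hq : qPochhammer q q n ≠ 0)
    (hag : qPochhammer q (a * g) n ≠ 0) :
    ∑ x ∈ antidiagonal n, (-1) ^ x.1 * q ^ x.1.choose 2 * g ^ x.1 * qPochhammer q a x.1 /
        (qPochhammer q (a * g) x.1 * qPochhammer q q x.1 * qPochhammer q q x.2) =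
      qPochhammer q g n / (qPochhammer q q n * qPochhammer q (a * g) n) := by
  have prod_neg_mul_pow (m : ℕ) :
      ∏ i ∈ range m, (0 - g * q ^ i) = (-1) ^ m * q ^ m.choose 2 * g ^ m := by
    rw [Nat.choose_two_right, ← sum_range_id, ← prod_pow_eq_pow_sum]
    simp only [zero_sub, ← neg_mul, prod_mul_distrib, prod_const, card_range, neg_pow g]
    ring
  have := sum_saalschutzTerm a 0 g hq hag
  simp only [saalschutzTerm, prod_neg_mul_pow, qPochhammer_zero_left, mul_zero, mul_one,
    one_mul] at this
  rw [← this]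
  exact sum_congr rfl fun x _ => by ring

lemma qPochhammer_zpow_neg_eq_zero {q : K} (hq : q ≠ 0) {m n : ℕ} (h : n < m) :
    qPochhammer q (q ^ (-n : ℤ)) m = 0 :=
  prod_eq_zero (mem_range.2 h) (by simp [hq])

lemma qPochhammer_zpow_neg_div {q : K} {m p : ℕ} (hq : q ≠ 0)
    (h : qPochhammer q q (m + p) ≠ 0) :
    qPochhammer q (q ^ (-(m + p : ℕ) : ℤ)) m / qPochhammer q q (m + p) =
      (-1) ^ m * q ^ (m.choose 2 - m * (m + p) : ℤ) / qPochhammer q q p := by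
  rw [div_eq_div_iff h (qPochhammer_ne_zero_of_le (Nat.le_add_left p m) h)]
  have base : q ^ (-(m + p : ℕ) : ℤ) = q ^ (1 - m : ℤ) / q ^ (p + 1) := by
    rw [← zpow_natCast, ← zpow_sub₀ hq]; congr 1; push_cast; ring
  have exponent :
      (q ^ (p + 1)) ^ (-m : ℤ) * q ^ (-m.choose 2 : ℤ) = q ^ (m.choose 2 - m * (m + p) : ℤ) := by
    rw [← zpow_natCast, ← zpow_mul, ← zpow_add₀ hq]
    congr 1
    push_cast
    linear_combination -two_mul_choose_two m
  rw [base, qPochhammer_reverse hq (pow_ne_zero _ hq), ← exponent, add_comm m p, qPochhammer_add,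
    pow_succ' q p]
  ring

lemma qPochhammer_reverse_div {q c : K} {k l n : ℕ} (hq : q ≠ 0) (hc : c ≠ 0)
    (h : qPochhammer q (c * q ^ (-(k + l : ℕ) : ℤ)) (k + l + n) ≠ 0) :
    qPochhammer q (q ^ (1 - n : ℤ) / c) k / qPochhammer q c n =
      (-1) ^ k * c ^ (-k : ℤ) * q ^ (k + k.choose 2 - n * k : ℤ) *
        (qPochhammer q (c * q ^ (-(k + l : ℕ) : ℤ)) (k + l) /
          qPochhammer q (c * q ^ (-(k + l : ℕ) : ℤ)) (n + l)) := by
  set d := c * q ^ (-(k + l : ℕ) : ℤ) with hd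
  have hdc : d * q ^ (k + l) = c := by
    rw [hd, zpow_neg, zpow_natCast, inv_mul_cancel_right₀ (pow_ne_zero _ hq)]
  have hdx : d * q ^ (n + l) = c * q ^ (n - k : ℤ) := by
    rw [hd, mul_assoc, ← zpow_natCast, ← zpow_add₀ hq]; congr 2; push_cast; ring
  have base : q ^ (1 - n : ℤ) / c = q ^ (1 - k : ℤ) / (d * q ^ (n + l)) := by
    rw [hdx, div_mul_eq_div_div_swap, ← zpow_sub₀ hq]; congr 2; ring
  have monomial : (d * q ^ (n + l)) ^ (-k : ℤ) * q ^ (-k.choose 2 : ℤ) =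
      c ^ (-k : ℤ) * q ^ (k + k.choose 2 - n * k : ℤ) := by
    rw [hdx, mul_zpow, ← zpow_mul, mul_assoc, ← zpow_add₀ hq]
    congr 2
    linear_combination -two_mul_choose_two k
  have shift : qPochhammer q d (n + l) * qPochhammer q (d * q ^ (n + l)) k =
      qPochhammer q d (k + l) * qPochhammer q c n := by
    rw [← hdc, ← qPochhammer_add, ← qPochhammer_add]; congr 1; ring
  have hcn : qPochhammer q c n ≠ 0 := by
    rw [qPochhammer_add, hdc] at h
    exact right_ne_zero_of_mul h
  have hdn : qPochhammer q d (n + l) ≠ 0 := qPochhammer_ne_zero_of_le (by omega) h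
  rw [← mul_div_assoc, div_eq_div_iff hcn hdn, base,
    qPochhammer_reverse hq (hdx ▸ mul_ne_zero hc (zpow_ne_zero _ hq))]
  linear_combination (-1) ^ k * qPochhammer q d (k + l) * qPochhammer q c n * monomial +
    (-1) ^ k * (d * q ^ (n + l)) ^ (-k : ℤ) * q ^ (-k.choose 2 : ℤ) * shift

/-- The monomial coefficient in the summand `ggrTerm`. -/
def ggrPower (q α β γ : K) (i j k l m n : ℕ) : K :=
  q ^ ((m : ℤ) * n - (k : ℤ) * l - (j : ℤ) * m - (l : ℤ) * n -
        (j.choose 2 : ℤ) - (k.choose 2 : ℤ) - (l.choose 2 : ℤ) - (m.choose 2 : ℤ)) *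
    α ^ (-(l : ℤ)) * β ^ ((i : ℤ) - (l : ℤ)) *
    γ ^ (-(i : ℤ) - (j : ℤ) + (k : ℤ) + (l : ℤ))

/-- The summand of the `q`-analogue of the Gelfand–Graev–Retakh identity. -/
def ggrTerm (q α β γ : K) (i j k l m n : ℕ) : K :=
  ggrPower q α β γ i j k l m n *
    (qPochhammer q β n * qPochhammer q (α * β / γ) n * qPochhammer q (γ / β) i *
      qPochhammer q (β * q ^ (n : ℤ)) j *
      qPochhammer q (q ^ (1 - (n : ℤ)) / (α * β)) k *
      qPochhammer q (α * β * q ^ (n : ℤ) / γ) l *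
      qPochhammer q (q ^ (-(n : ℤ))) m) /
    (qPochhammer q (α * β) n * qPochhammer q q n * qPochhammer q q i *
      qPochhammer q q j * qPochhammer q q k * qPochhammer q q l *
      qPochhammer q q m)

/-- The monomial factor common to all summands once the shifted factorials are regrouped. -/
def ggrMonomial (q α β γ : K) (X Y Z : ℕ) : K :=
  (-1) ^ Z * q ^ (Z - Y.choose 2 : ℤ) * α ^ (-Z : ℤ) * β ^ (X - Z : ℤ) * γ ^ (Z - X - Y : ℤ)

lemma ggrTerm_eq_zero {q : K} (hq : q ≠ 0) (α β γ : K) (i j k l : ℕ) {m n : ℕ} (h : n < m) :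
    ggrTerm q α β γ i j k l m n = 0 := by
  simp only [ggrTerm, qPochhammer_zpow_neg_eq_zero hq h, mul_zero, zero_div]

lemma ggrPower_mul_eq {q α β γ : K} (hq : q ≠ 0) (hα : α ≠ 0) (hβ : β ≠ 0) (hγ : γ ≠ 0)
    (i j k l m p : ℕ) :
    ggrPower q α β γ i j k l m (m + p) *
        ((-1) ^ m * q ^ (m.choose 2 - m * (m + p) : ℤ)) *
        ((-1) ^ k * (α * β) ^ (-k : ℤ) * q ^ (k + k.choose 2 - (m + p : ℕ) * k : ℤ)) *
        ((-1) ^ l * q ^ (l.choose 2 - l * (l + k) : ℤ))⁻¹ =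
      ggrMonomial q α β γ (p + l + i) (m + j) (k + l) * (γ / β) ^ (p + l) *
        (q ^ (-(k + l : ℕ) : ℤ)) ^ p *
        ((-1) ^ m * q ^ m.choose 2 * (γ * q ^ (-(k + l : ℕ) : ℤ)) ^ m) := by
  have q_power :
      q ^ ((m : ℤ) * (m + p : ℕ) - (k : ℤ) * l - (j : ℤ) * m - (l : ℤ) * (m + p : ℕ) -
          (j.choose 2 : ℤ) - (k.choose 2 : ℤ) - (l.choose 2 : ℤ) - (m.choose 2 : ℤ)) *
        q ^ (m.choose 2 - m * (m + p) : ℤ) * q ^ (k + k.choose 2 - (m + p : ℕ) * k : ℤ) *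
        q ^ (-(l.choose 2 - l * (l + k)) : ℤ) =
      q ^ ((k + l : ℕ) - (m + j).choose 2 : ℤ) * (q ^ (-(k + l : ℕ) : ℤ)) ^ p *
        q ^ m.choose 2 * (q ^ (-(k + l : ℕ) : ℤ)) ^ m := by
    simp only [← zpow_natCast, ← zpow_mul, ← zpow_add₀ hq]
    congr 1
    have hm := two_mul_choose_two m
    have hj := two_mul_choose_two j
    have hl := two_mul_choose_two l
    have hmj := two_mul_choose_two (m + j)
    push_cast at hmj ⊢
    linarith
  have α_power : α ^ (-l : ℤ) * α ^ (-k : ℤ) = α ^ (-(k + l : ℕ) : ℤ) := by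
    rw [← zpow_add₀ hα]; congr 1; push_cast; ring
  have β_power : β ^ (i - l : ℤ) * β ^ (-k : ℤ) =
      β ^ ((p + l + i : ℕ) - (k + l : ℕ) : ℤ) * (β⁻¹) ^ (p + l) := by
    rw [← zpow_natCast, inv_zpow', ← zpow_add₀ hβ, ← zpow_add₀ hβ]; congr 1; push_cast; ring
  have γ_power : γ ^ (-i - j + k + l : ℤ) =
      γ ^ ((k + l : ℕ) - (p + l + i : ℕ) - (m + j : ℕ) : ℤ) * γ ^ (p + l) * γ ^ m := by
    simp only [← zpow_natCast, ← zpow_add₀ hγ]; congr 1; push_cast; ring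
  have product := congrArg₂ HMul.hMul (congrArg₂ HMul.hMul q_power α_power)
    (congrArg₂ HMul.hMul β_power γ_power)
  simp only [ggrPower, ggrMonomial, mul_inv, ← inv_pow, inv_neg, inv_one, ← zpow_neg, mul_zpow,
    div_eq_mul_inv, mul_pow, pow_add (-1 : K)]
  linear_combination (-1) ^ m * (-1) ^ k * (-1) ^ l * product

lemma ggrTerm_eq_mul {q α β γ : K} (hq : q ≠ 0) (hα : α ≠ 0) (hβ : β ≠ 0) (hγ : γ ≠ 0)
    (i j k l m p : ℕ) (hqn : qPochhammer q q (m + p) ≠ 0) (hqZ : qPochhammer q q (k + l) ≠ 0)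
    (hαβ : qPochhammer q (α * β * q ^ (-(k + l : ℕ) : ℤ)) (k + l + (m + p)) ≠ 0) :
    ggrTerm q α β γ i j k l m (m + p) =
      ggrMonomial q α β γ (p + l + i) (m + j) (k + l) *
        (qPochhammer q β (m + j) * qPochhammer q (α * β * q ^ (-(k + l : ℕ) : ℤ)) (k + l) /
          qPochhammer q q (k + l)) *
        ((γ / β) ^ (p + l) * qPochhammer q (α * β / γ) (p + l) * qPochhammer q (γ / β) i /
          (qPochhammer q (α * β * q ^ (-(k + l : ℕ) : ℤ)) (p + l) * qPochhammer q q i)) *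
        ((q ^ (-(k + l : ℕ) : ℤ)) ^ p * qPochhammer q (β * q ^ (m + j)) p *
          qPochhammer q (q ^ (-(k + l : ℕ) : ℤ)) l / (qPochhammer q q p * qPochhammer q q l)) *
        ((-1) ^ m * q ^ m.choose 2 * (γ * q ^ (-(k + l : ℕ) : ℤ)) ^ m *
          qPochhammer q (α * β / γ * q ^ (p + l)) m /
          (qPochhammer q (α * β * q ^ (-(k + l : ℕ) : ℤ) * q ^ (p + l)) m *
            qPochhammer q q m * qPochhammer q q j)) := by
  set d := α * β * q ^ (-(k + l : ℕ) : ℤ)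
  have β_part := qPochhammer_mul_eq_of_add_eq (by ring : m + p + j = m + j + p) q β
  have γ_part := qPochhammer_mul_eq_of_add_eq (by ring : m + p + l = p + l + m) q (α * β / γ)
  have d_part : qPochhammer q d (m + p + l) =
      qPochhammer q d (p + l) * qPochhammer q (d * q ^ (p + l)) m := by
    rw [← qPochhammer_add]; congr 1; ring
  have l_part : (qPochhammer q q k)⁻¹ = ((-1) ^ l * q ^ (l.choose 2 - l * (l + k) : ℤ))⁻¹ *
      (qPochhammer q (q ^ (-(k + l : ℕ) : ℤ)) l / qPochhammer q q (k + l)) := by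
    rw [add_comm k l] at hqZ ⊢
    rw [qPochhammer_zpow_neg_div hq hqZ, div_eq_mul_inv,
      inv_mul_cancel_left₀ (by simp [hq, zpow_ne_zero])]
  calc ggrTerm q α β γ i j k l m (m + p) = ggrPower q α β γ i j k l m (m + p) *
          (qPochhammer q β (m + p) * qPochhammer q (β * q ^ (m + p)) j) *
          (qPochhammer q (α * β / γ) (m + p) * qPochhammer q (α * β / γ * q ^ (m + p)) l) *
          (qPochhammer q (q ^ (1 - (m + p : ℕ) : ℤ) / (α * β)) k / qPochhammer q (α * β) (m + p)) *
          (qPochhammer q (q ^ (-(m + p : ℕ) : ℤ)) m / qPochhammer q q (m + p)) *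
          (qPochhammer q q k)⁻¹ * (qPochhammer q (γ / β) i /
            (qPochhammer q q i * qPochhammer q q j * qPochhammer q q l * qPochhammer q q m)) := by
        rw [ggrTerm, zpow_natCast, mul_div_right_comm (α * β) (q ^ (m + p)) γ]
        simp only [div_eq_mul_inv, mul_inv]
        ring
    _ = _ := by
      rw [β_part, γ_part, qPochhammer_reverse_div hq (mul_ne_zero hα hβ) hαβ, d_part,
        qPochhammer_zpow_neg_div hq hqn, l_part]
      linear_combination (qPochhammer q β (m + j) * qPochhammer q (β * q ^ (m + j)) p *
        (qPochhammer q (α * β / γ) (p + l) * qPochhammer q (α * β / γ * q ^ (p + l)) m) *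
        (qPochhammer q d (k + l) /
          (qPochhammer q d (p + l) * qPochhammer q (d * q ^ (p + l)) m)) *
        (qPochhammer q (q ^ (-(k + l : ℕ) : ℤ)) l / qPochhammer q q (k + l)) /
        qPochhammer q q p * (qPochhammer q (γ / β) i /
          (qPochhammer q q i * qPochhammer q q j * qPochhammer q q l * qPochhammer q q m))) *
        ggrPower_mul_eq hq hα hβ hγ i j k l m p

/-- The range `i + l + n - m = X`, `j + m = Y`, `k + l = Z` of summation, as tuples
`(i, j, k, l, m, n)`; the first condition is written without truncated subtraction. -/
def ggrIndices (X Y Z : ℕ) : Set (ℕ × ℕ × ℕ × ℕ × ℕ × ℕ) :=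
  {t | t.1 + t.2.2.2.1 + t.2.2.2.2.2 = X + t.2.2.2.2.1 ∧ t.2.1 + t.2.2.2.2.1 = Y ∧
    t.2.2.1 + t.2.2.2.1 = Z}

lemma finite_ggrIndices (X Y Z : ℕ) : (ggrIndices X Y Z).Finite := by
  refine (Set.finite_Iic (X + Y, Y, Z, Z, Y, X + Y)).subset fun t ht => ?_
  simp only [ggrIndices, Set.mem_ofPred_eq, Set.mem_Iic, Prod.le_def] at ht ⊢
  omega

lemma finsum_ggrIndices_eq_sum_antidiagonal {M : Type*} [AddCommMonoid M]
    {f : ℕ → ℕ → ℕ → ℕ → ℕ → ℕ → M} (hf : ∀ i j k l m n, n < m → f i j k l m n = 0)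
    (X Y Z : ℕ) :
    ∑ᶠ t ∈ ggrIndices X Y Z, f t.1 t.2.1 t.2.2.1 t.2.2.2.1 t.2.2.2.2.1 t.2.2.2.2.2 =
    ∑ x ∈ antidiagonal X, ∑ y ∈ antidiagonal x.1, ∑ z ∈ antidiagonal Y,
      if y.2 ≤ Z then f x.2 z.2 (Z - y.2) y.2 z.1 (z.1 + y.1) else 0 := by
  let φ : (_ : (_ : ℕ × ℕ) × ℕ × ℕ) × ℕ × ℕ → ℕ × ℕ × ℕ × ℕ × ℕ × ℕ := fun u =>
    (u.1.1.2, u.2.2, Z - u.1.2.2, u.1.2.2, u.2.1, u.2.1 + u.1.2.1)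
  let J := (((antidiagonal X).sigma fun x => antidiagonal x.1).sigma
    fun _ => antidiagonal Y).filter fun u => u.1.2.2 ≤ Z
  have mem_J (u) : u ∈ J ↔ ((u.1.1.1 + u.1.1.2 = X ∧ u.1.2.1 + u.1.2.2 = u.1.1.1) ∧
      u.2.1 + u.2.2 = Y) ∧ u.1.2.2 ≤ Z := by
    simp only [J, mem_filter, mem_sigma, HasAntidiagonal.mem_antidiagonal]
  have φ_injOn : Set.InjOn φ J := by
    rintro ⟨⟨⟨t, i⟩, p, l⟩, m, j⟩ hu ⟨⟨⟨t', i'⟩, p', l'⟩, m', j'⟩ hu' h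
    simp only [mem_coe, mem_J] at hu hu'
    simp only [φ, Prod.mk.injEq] at h
    obtain ⟨rfl, rfl, rfl, rfl, rfl, rfl⟩ :
      t = t' ∧ i = i' ∧ p = p' ∧ l = l' ∧ m = m' ∧ j = j' := by omega
    rfl
  rw [finsum_mem_def, finsum_eq_sum_of_support_subset (s := J.image φ), sum_image φ_injOn,
    sum_sigma', sum_sigma']
  · refine (sum_congr rfl fun u hu => Set.indicator_of_mem ?_ _).trans (sum_filter _ _)
    rw [mem_J] at hu
    simp only [φ, ggrIndices, Set.mem_ofPred_eq]
    omega
  · rw [Set.support_indicator, coe_image]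
    rintro ⟨i, j, k, l, m, n⟩ ⟨h, hne⟩
    have hmn : m ≤ n := not_lt.1 fun hlt => hne (hf _ _ _ _ _ _ hlt)
    dsimp only [ggrIndices, Set.mem_ofPred_eq] at h
    refine ⟨⟨⟨(n - m + l, i), n - m, l⟩, m, j⟩, (mem_J _).2 ?_, ?_⟩
    · dsimp only; omega
    · simp only [φ, Prod.mk.injEq, true_and]; omega

lemma sum_ggrTerm {q α β γ : K} (hq : q ≠ 0) (hα : α ≠ 0) (hβ : β ≠ 0) (hγ : γ ≠ 0)
    (t i Y Z : ℕ) (hqXY : qPochhammer q q (t + i + Y) ≠ 0) (hqZ : qPochhammer q q Z ≠ 0)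
    (hαβ : qPochhammer q (α * β * q ^ (-Z : ℤ)) (Z + (t + i + Y)) ≠ 0) :
    (∑ y ∈ antidiagonal t, ∑ z ∈ antidiagonal Y,
      if y.2 ≤ Z then ggrTerm q α β γ i z.2 (Z - y.2) y.2 z.1 (z.1 + y.1) else 0) =
    ggrMonomial q α β γ (t + i) Y Z *
      (qPochhammer q β Y * qPochhammer q (α * β * q ^ (-Z : ℤ)) Z / qPochhammer q q Z) *
      ((γ / β) ^ t * qPochhammer q (α * β / γ) t * qPochhammer q (γ / β) i / qPochhammer q q i) *
      (qPochhammer q (β * q ^ Y * q ^ (-Z : ℤ)) t / qPochhammer q q t) *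
      (qPochhammer q (γ * q ^ (-Z : ℤ)) Y /
        (qPochhammer q q Y * qPochhammer q (α * β * q ^ (-Z : ℤ)) (t + Y))) := by
  have hqt : qPochhammer q q t ≠ 0 := qPochhammer_ne_zero_of_le (by omega) hqXY
  have hqY : qPochhammer q q Y ≠ 0 := qPochhammer_ne_zero_of_le (by omega) hqXY
  have base : α * β / γ * q ^ t * (γ * q ^ (-Z : ℤ)) = α * β * q ^ (-Z : ℤ) * q ^ t := by
    field_simp
  have hbase : qPochhammer q (α * β / γ * q ^ t * (γ * q ^ (-Z : ℤ))) Y ≠ 0 := by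
    have := qPochhammer_ne_zero_of_le (by omega : t + Y ≤ _) hαβ
    rw [qPochhammer_add] at this
    exact base ▸ right_ne_zero_of_mul this
  have vandermonde := qVandermonde _ _ hqY hbase
  rw [base] at vandermonde
  calc _ = ggrMonomial q α β γ (t + i) Y Z *
          (qPochhammer q β Y * qPochhammer q (α * β * q ^ (-Z : ℤ)) Z / qPochhammer q q Z) *
          ((γ / β) ^ t * qPochhammer q (α * β / γ) t * qPochhammer q (γ / β) i /
            (qPochhammer q (α * β * q ^ (-Z : ℤ)) t * qPochhammer q q i)) *
          (qPochhammer q (β * q ^ Y * q ^ (-Z : ℤ)) t / qPochhammer q q t *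
            (qPochhammer q (γ * q ^ (-Z : ℤ)) Y /
              (qPochhammer q q Y * qPochhammer q (α * β * q ^ (-Z : ℤ) * q ^ t) Y))) := by
        rw [← qVandermonde_convolution _ _ hqt, ← vandermonde, sum_mul_sum, mul_sum]
        simp only [mul_sum]
        refine sum_congr rfl fun ⟨p, l⟩ hy => sum_congr rfl fun ⟨m, j⟩ hz => ?_
        rw [HasAntidiagonal.mem_antidiagonal] at hy hz
        dsimp only at hy hz ⊢
        subst hy hz
        split_ifs with hl
        · obtain ⟨k, rfl⟩ := Nat.exists_eq_add_of_le' hl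
          rw [Nat.add_sub_cancel, ggrTerm_eq_mul hq hα hβ hγ i j k l m p
            (qPochhammer_ne_zero_of_le (by omega) hqXY) hqZ
            (qPochhammer_ne_zero_of_le (by omega) hαβ)]
          ring
        · rw [qPochhammer_zpow_neg_eq_zero hq (not_le.1 hl)]
          simp only [mul_zero, zero_div, zero_mul]
    _ = _ := by
      rw [qPochhammer_add]
      ring

theorem ggr_q_analogue_coefficients_first_form_general {q α β γ : K} (hq : q ≠ 0) (hα : α ≠ 0)
    (hβ : β ≠ 0) (hγ : γ ≠ 0) (X Y Z : ℕ) (hqXY : qPochhammer q q (X + Y) ≠ 0)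
    (hqZ : qPochhammer q q Z ≠ 0)
    (hαβ : qPochhammer q (α * β * q ^ (-Z : ℤ)) (Z + (X + Y)) ≠ 0) :
    ggrMonomial q α β γ X Y Z *
      (qPochhammer q α X * qPochhammer q β Y * qPochhammer q (α * β * q ^ (-Z : ℤ)) Z *
        qPochhammer q (γ * q ^ (-Z : ℤ)) (X + Y)) /
      (qPochhammer q q X * qPochhammer q q Y * qPochhammer q q Z *
        qPochhammer q (α * β * q ^ (-Z : ℤ)) (X + Y)) =
    ∑ᶠ t ∈ ggrIndices X Y Z,
      ggrTerm q α β γ t.1 t.2.1 t.2.2.1 t.2.2.2.1 t.2.2.2.2.1 t.2.2.2.2.2 := by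
  set d := α * β * q ^ (-Z : ℤ) with hd
  have d_base : α * β / γ * (β * q ^ Y * q ^ (-Z : ℤ)) * (γ / β) = d * q ^ Y := by
    rw [hd]; field_simp
  have α_base : α * β / γ * (γ / β) = α := by field_simp
  have γ_base : β * q ^ Y * q ^ (-Z : ℤ) * (γ / β) = γ * q ^ (-Z : ℤ) * q ^ Y := by field_simp
  have hqX : qPochhammer q q X ≠ 0 := qPochhammer_ne_zero_of_le (by omega) hqXY
  have hdY : qPochhammer q (d * q ^ Y) X ≠ 0 := by
    have := qPochhammer_ne_zero_of_le (by omega : Y + X ≤ _) hαβ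
    rw [qPochhammer_add] at this
    exact right_ne_zero_of_mul this
  have saalschutz := qSaalschutz (α * β / γ) (β * q ^ Y * q ^ (-Z : ℤ)) (γ / β) hqX
    (d_base ▸ hdY)
  rw [d_base, α_base, γ_base] at saalschutz
  rw [finsum_ggrIndices_eq_sum_antidiagonal fun i j k l m n => ggrTerm_eq_zero hq α β γ i j k l,
    add_comm X Y, qPochhammer_add, qPochhammer_add]
  calc _ = ggrMonomial q α β γ X Y Z * (qPochhammer q β Y * qPochhammer q d Z / qPochhammer q q Z) *
          (qPochhammer q (γ * q ^ (-Z : ℤ)) Y / (qPochhammer q q Y * qPochhammer q d Y)) *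
          (qPochhammer q α X * qPochhammer q (γ * q ^ (-Z : ℤ) * q ^ Y) X /
            (qPochhammer q q X * qPochhammer q (d * q ^ Y) X)) := by ring
    _ = _ := by
      rw [← saalschutz, mul_sum]
      refine sum_congr rfl fun ⟨t, i⟩ hx => ?_
      rw [HasAntidiagonal.mem_antidiagonal] at hx
      subst hx
      rw [sum_ggrTerm hq hα hβ hγ t i Y Z hqXY hqZ hαβ, add_comm t Y, qPochhammer_add]
      ring

end Field

lemma qpoch_natCast (q a : ℂ) (n : ℕ) : qpoch q a n = qPochhammer q a n := by
  simp [qpoch, qPochhammer]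

lemma qpoch_sub {q a : ℂ} (hq : q ≠ 0) (s Z : ℕ)
    (h : qPochhammer q (a * q ^ (-Z : ℤ)) Z ≠ 0) :
    qpoch q a (s - Z) =
      qPochhammer q (a * q ^ (-Z : ℤ)) s / qPochhammer q (a * q ^ (-Z : ℤ)) Z := by
  rcases le_or_gt Z s with hs | hs
  · obtain ⟨d, rfl⟩ := Nat.exists_eq_add_of_le hs
    rw [Nat.cast_add, add_sub_cancel_left, qpoch_natCast, qPochhammer_add,
      mul_div_cancel_left₀ _ h, mul_assoc, zpow_neg, zpow_natCast,
      inv_mul_cancel₀ (pow_ne_zero _ hq), mul_one]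
  · obtain ⟨d, rfl⟩ := Nat.exists_eq_add_of_le hs.le
    rw [qPochhammer_add] at h ⊢
    rw [div_mul_cancel_left₀ (left_ne_zero_of_mul h), qpoch, if_neg (by omega), qPochhammer]
    congr 1
    refine prod_congr (by congr 1; omega) fun i _ => ?_
    rw [mul_assoc a, mul_assoc a, ← zpow_natCast, ← zpow_natCast, ← zpow_add₀ hq, ← zpow_add₀ hq]
    congr 3
    push_cast; ring

lemma qpoch_div_mul_qpoch_sub {q γ : ℂ} (hq : q ≠ 0) (hγ : γ ≠ 0) (s Z : ℕ)
    (h : qPochhammer q (γ * q ^ (-Z : ℤ)) Z ≠ 0) :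
    qpoch q (q / γ) Z * qpoch q γ (s - Z) =
      (-1) ^ Z * γ ^ (-Z : ℤ) * q ^ (Z + Z.choose 2 : ℤ) *
        qPochhammer q (γ * q ^ (-Z : ℤ)) s := by
  have base : q / γ = q ^ (1 - Z : ℤ) / (γ * q ^ (-Z : ℤ)) := by
    rw [div_mul_eq_div_div_swap, ← zpow_sub₀ hq]; simp
  have exponent : (γ * q ^ (-Z : ℤ)) ^ (-Z : ℤ) * q ^ (-Z.choose 2 : ℤ) =
      γ ^ (-Z : ℤ) * q ^ (Z + Z.choose 2 : ℤ) := by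
    rw [mul_zpow, ← zpow_mul, mul_assoc, ← zpow_add₀ hq]
    congr 2
    linear_combination -two_mul_choose_two Z
  rw [qpoch_sub hq s Z h, qpoch_natCast, base,
    qPochhammer_reverse hq (mul_ne_zero hγ (zpow_ne_zero _ hq))]
  field_simp
  linear_combination qPochhammer q (γ * q ^ (-Z : ℤ)) s * exponent

lemma qpoch_coefficient_eq {q α β γ : ℂ} (hq : q ≠ 0) (hγ : γ ≠ 0) (X Y Z : ℕ)
    (hαβ : qPochhammer q (α * β * q ^ (-Z : ℤ)) Z ≠ 0)
    (hγZ : qPochhammer q (γ * q ^ (-Z : ℤ)) Z ≠ 0) :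
    q ^ (-(Y.choose 2 : ℤ) - (Z.choose 2 : ℤ)) * α ^ (-(Z : ℤ)) * β ^ ((X : ℤ) - (Z : ℤ)) *
        γ ^ (2 * (Z : ℤ) - (X : ℤ) - (Y : ℤ)) *
        (qpoch q α (X : ℤ) * qpoch q β (Y : ℤ) * qpoch q (q / γ) (Z : ℤ) *
          qpoch q γ ((X : ℤ) + (Y : ℤ) - (Z : ℤ))) /
        (qpoch q q (X : ℤ) * qpoch q q (Y : ℤ) * qpoch q q (Z : ℤ) *
          qpoch q (α * β) ((X : ℤ) + (Y : ℤ) - (Z : ℤ))) =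
      ggrMonomial q α β γ X Y Z *
        (qPochhammer q α X * qPochhammer q β Y * qPochhammer q (α * β * q ^ (-Z : ℤ)) Z *
          qPochhammer q (γ * q ^ (-Z : ℤ)) (X + Y)) /
        (qPochhammer q q X * qPochhammer q q Y * qPochhammer q q Z *
          qPochhammer q (α * β * q ^ (-Z : ℤ)) (X + Y)) := by
  have q_power : q ^ (-Y.choose 2 - Z.choose 2 : ℤ) * q ^ (Z + Z.choose 2 : ℤ) =
      q ^ (Z - Y.choose 2 : ℤ) := by
    rw [← zpow_add₀ hq]; congr 1; ring
  have γ_power : γ ^ (2 * Z - X - Y : ℤ) * γ ^ (-Z : ℤ) = γ ^ (Z - X - Y : ℤ) := by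
    rw [← zpow_add₀ hγ]; congr 1; ring
  rw [← Nat.cast_add, mul_assoc (qpoch q α X * qpoch q β Y),
    qpoch_div_mul_qpoch_sub hq hγ _ _ hγZ, qpoch_sub hq _ _ hαβ, ggrMonomial, ← q_power, ← γ_power]
  simp only [qpoch_natCast, div_eq_mul_inv, mul_inv, inv_inv]
  ring

theorem ggr_q_analogue_coefficients_first_form (q α β γ : ℂ)
    (hq : q ≠ 0) (hq1 : ∀ i : ℕ, 1 ≤ i → q ^ i ≠ 1)
    (hα : α ≠ 0) (hβ : β ≠ 0) (hγ : γ ≠ 0)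
    (hαβ : ∀ i : ℤ, α * β ≠ q ^ i) (hγq : ∀ i : ℤ, γ ≠ q ^ i)
    (X Y Z : ℕ) :
    q ^ (-(Y.choose 2 : ℤ) - (Z.choose 2 : ℤ)) * α ^ (-(Z : ℤ)) * β ^ ((X : ℤ) - (Z : ℤ)) *
        γ ^ (2 * (Z : ℤ) - (X : ℤ) - (Y : ℤ)) *
        (qpoch q α (X : ℤ) * qpoch q β (Y : ℤ) * qpoch q (q / γ) (Z : ℤ) *
          qpoch q γ ((X : ℤ) + (Y : ℤ) - (Z : ℤ))) /
        (qpoch q q (X : ℤ) * qpoch q q (Y : ℤ) * qpoch q q (Z : ℤ) *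
          qpoch q (α * β) ((X : ℤ) + (Y : ℤ) - (Z : ℤ))) =
    (∑' t : ℕ × ℕ × ℕ × ℕ × ℕ × ℕ,
      (fun (i j k l m n : ℕ) =>
        if i + l + n = X + m ∧ j + m = Y ∧ k + l = Z then
          q ^ ((m : ℤ) * n - (k : ℤ) * l - (j : ℤ) * m - (l : ℤ) * n -
                (j.choose 2 : ℤ) - (k.choose 2 : ℤ) - (l.choose 2 : ℤ) - (m.choose 2 : ℤ)) *
            α ^ (-(l : ℤ)) * β ^ ((i : ℤ) - (l : ℤ)) *
            γ ^ (-(i : ℤ) - (j : ℤ) + (k : ℤ) + (l : ℤ)) *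
            (qpoch q β (n : ℤ) * qpoch q (α * β / γ) (n : ℤ) * qpoch q (γ / β) (i : ℤ) *
              qpoch q (β * q ^ (n : ℤ)) (j : ℤ) *
              qpoch q (q ^ (1 - (n : ℤ)) / (α * β)) (k : ℤ) *
              qpoch q (α * β * q ^ (n : ℤ) / γ) (l : ℤ) *
              qpoch q (q ^ (-(n : ℤ))) (m : ℤ)) /
            (qpoch q (α * β) (n : ℤ) * qpoch q q (n : ℤ) * qpoch q q (i : ℤ) *
              qpoch q q (j : ℤ) * qpoch q q (k : ℤ) * qpoch q q (l : ℤ) *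
              qpoch q q (m : ℤ))
        else 0) t.1 t.2.1 t.2.2.1 t.2.2.2.1 t.2.2.2.2.1 t.2.2.2.2.2) := by
  have q_ne_zero (n : ℕ) : qPochhammer q q n ≠ 0 :=
    qPochhammer_ne_zero (fun i => pow_succ' q i ▸ hq1 _ i.succ_pos) n
  have shifted_ne_zero {a : ℂ} (ha : ∀ i : ℤ, a ≠ q ^ i) (n : ℕ) :=
    qPochhammer_mul_zpow_ne_zero hq ha (-Z) n
  rw [qpoch_coefficient_eq hq hγ X Y Z (shifted_ne_zero hαβ Z) (shifted_ne_zero hγq Z),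
    ggr_q_analogue_coefficients_first_form_general hq hα hβ hγ X Y Z (q_ne_zero _) (q_ne_zero _)
      (shifted_ne_zero hαβ _), finsum_mem_def, ← tsum_eq_finsum (L := .unconditional _)
        ((finite_ggrIndices X Y Z).subset Set.support_indicator_subset)]
  refine tsum_congr fun t => ?_
  simp only [qpoch_natCast, ggrTerm, ggrPower, Set.indicator, ggrIndices, Set.mem_ofPred_eq]
  split_ifs with h
  · exact if_pos h
  · exact if_neg h
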